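/- arXiv:1310.7767 — 2 statements merged into one kernel-verified Lean document; each statement's English description precedes it below -/
import Mathlib

section
/- Let f be a standard solution family and let K = 2·∫₀¹ √(1 − t³) dt. Then for every K̃ > K there exists C > 0 such that |f(0,λ)| ≤ C·e^{K̃·|λ|^{5/6}} for all λ ∈ ℂ. -/
open Complex

/-- `f : ℂ × ℂ → ℂ` is a standard solution family for `f'' = (z³ + λ) f`:
for each `λ` the map `z ↦ f(z,λ)` is entire and solves the ODE, and it has the
Liouville–Green asymptotics `f(z,λ) = z^{-3/4} e^{-(2/5) z^{5/2}} (1 + O(z^{-1/2}))`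
as `z → ∞` in the sector `|arg z| ≤ 3π/5 - ε`, uniformly for `λ` in compact sets. -/
def IsStdSolutionFamily (f : ℂ → ℂ → ℂ) : Prop :=
  (∀ lam : ℂ, Differentiable ℂ (fun z => f z lam) ∧
    ∀ z : ℂ, deriv (deriv (fun w => f w lam)) z = (z ^ 3 + lam) * f z lam) ∧
  (∀ ε > (0 : ℝ), ∀ L : Set ℂ, IsCompact L →
    ∃ C > (0 : ℝ), ∃ R > (0 : ℝ), ∀ lam ∈ L, ∀ z : ℂ,
      R ≤ ‖z‖ → |Complex.arg z| ≤ 3 * Real.pi / 5 - ε →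
      ‖f z lam * z ^ ((3 : ℂ) / 4) *
          Complex.exp ((2 / 5 : ℂ) * z ^ ((5 : ℂ) / 2)) - 1‖
        ≤ C * ‖z‖ ^ (-(1 / 2) : ℝ))

/-
On the positive real axis `u = f(·, λ)` satisfies `|u''| ≤ (x³ + |λ|) |u|`. For `Q = x³ + ν` the
Liouville–Green function `G = Q ^ (-1/4) exp (-∫₀ˣ √Q)` satisfies `G'' ≥ (Q - Q'' / (4 Q)) G`, and
`ν = |λ| + 9` makes this coefficient at least `x³ + |λ|`, so `G` is a decaying supersolution.
Beyond the last point where `|u|` meets a multiple `M G`, integrating from `+∞` gives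
`|u'| ≤ -M G'`; the gap `M G - |u|` thus only grows as `x` decreases, and there is no such point:
the inequality `|u| < M G` descends from `+∞` to `0`. As
`∫₀ˣ √Q = (2/5) x ^ (5/2) + K ν ^ (5/6) + o(1)`, the prescribed asymptotics of `u` allow
`M = 2 exp (K ν ^ (5/6))`. The constant arises as a Beta integral over `(0, ∞)`, and the reflection
formula turns it into the integral over `[0, 1]` defining `K`.
-/

open Filter MeasureTheory Set Topology
open ProbabilityTheory (beta beta_pos beta_eq_betaIntegralReal)

section Comparison

variable {E : Type*} [NormedAddCommGroup E] [NormedSpace ℝ E]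
  {f f' f'' : ℝ → E} {g g' g'' : ℝ → ℝ} {a : ℝ}

theorem norm_sub_le_sub_of_norm_deriv_le {b : ℝ} (hab : a ≤ b)
    (hf : ∀ x ∈ Icc a b, HasDerivAt f (f' x) x) (hg : ∀ x ∈ Icc a b, HasDerivAt g (g' x) x)
    (hfg : ∀ x ∈ Icc a b, ‖f' x‖ ≤ g' x) : ‖f b - f a‖ ≤ g b - g a := by
  have hIco {x : ℝ} (hx : x ∈ Ico a b) : x ∈ Icc a b := Ico_subset_Icc_self hx
  refine image_norm_le_of_norm_deriv_right_le_deriv_boundary'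
    (f := fun x => f x - f a) (B := fun x => g x - g a) ?_
    (fun x hx => ((hf x (hIco hx)).sub_const _).hasDerivWithinAt) (by simp) ?_
    (fun x hx => ((hg x (hIco hx)).sub_const _).hasDerivWithinAt)
    (fun x hx => hfg x (hIco hx)) (right_mem_Icc.2 hab)
  · exact fun x hx => ((hf x hx).sub_const _).continuousAt.continuousWithinAt
  · exact fun x hx => ((hg x hx).sub_const _).continuousAt.continuousWithinAt

theorem norm_taylor_remainder_le {b : ℝ} (hab : a ≤ b)
    (hf : ∀ x ∈ Icc a b, HasDerivAt f (f' x) x) (hf' : ∀ x ∈ Icc a b, HasDerivAt f' (f'' x) x)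
    (hg : ∀ x ∈ Icc a b, HasDerivAt g (g' x) x) (hg' : ∀ x ∈ Icc a b, HasDerivAt g' (g'' x) x)
    (hfg : ∀ x ∈ Icc a b, ‖f'' x‖ ≤ g'' x) :
    ‖f b - f a - (b - a) • f' a‖ ≤ g b - g a - (b - a) * g' a := by
  have hderiv : ∀ x ∈ Icc a b, ‖f' x - f' a‖ ≤ g' x - g' a := by
    intro x hx
    have hsub : Icc a x ⊆ Icc a b := Icc_subset_Icc_right hx.2
    exact norm_sub_le_sub_of_norm_deriv_le hx.1 (fun y hy => hf' y (hsub hy))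
      (fun y hy => hg' y (hsub hy)) (fun y hy => hfg y (hsub hy))
  have := norm_sub_le_sub_of_norm_deriv_le hab
    (fun x hx => (hf x hx).sub ((hasDerivAt_id x).smul_const (f' a)))
    (fun x hx => (hg x hx).sub ((hasDerivAt_id x).mul_const (g' a)))
    (by simpa using hderiv)
  convert this using 1
  · congr 1
    simp only [Pi.sub_apply, id, sub_smul]
    abel
  · simp only [Pi.sub_apply, id]
    ring

theorem norm_deriv_le_neg_deriv_of_tendsto {l : E} {c : ℝ}
    (hf : ∀ x ≥ a, HasDerivAt f (f' x) x) (hf' : ∀ x ≥ a, HasDerivAt f' (f'' x) x)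
    (hg : ∀ x ≥ a, HasDerivAt g (g' x) x) (hg' : ∀ x ≥ a, HasDerivAt g' (g'' x) x)
    (hfg : ∀ x ≥ a, ‖f'' x‖ ≤ g'' x)
    (hfl : Tendsto f atTop (𝓝 l)) (hgc : Tendsto g atTop (𝓝 c)) : ‖f' a‖ ≤ -g' a := by
  have hinv : Tendsto (fun b : ℝ => (b - a)⁻¹) atTop (𝓝 0) :=
    tendsto_inv_atTop_zero.comp (tendsto_atTop_add_const_right _ (-a) tendsto_id)
  have hleft : Tendsto (fun b => ‖(b - a)⁻¹ • (f b - f a) - f' a‖) atTop (𝓝 ‖f' a‖) := by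
    simpa using ((hinv.smul (hfl.sub_const (f a))).sub_const (f' a)).norm
  have hright : Tendsto (fun b => (b - a)⁻¹ * (g b - g a) - g' a) atTop (𝓝 (-g' a)) := by
    simpa using (hinv.mul (hgc.sub_const (g a))).sub_const (g' a)
  refine le_of_tendsto_of_tendsto hleft hright ?_
  filter_upwards [eventually_gt_atTop a] with b hab
  have hba : 0 < b - a := sub_pos.2 hab
  have htaylor : ‖f b - f a - (b - a) • f' a‖ ≤ g b - g a - (b - a) * g' a :=
    norm_taylor_remainder_le hab.le (fun x hx => hf x hx.1) (fun x hx => hf' x hx.1)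
      (fun x hx => hg x hx.1) (fun x hx => hg' x hx.1) (fun x hx => hfg x hx.1)
  calc ‖(b - a)⁻¹ • (f b - f a) - f' a‖
      = (b - a)⁻¹ * ‖f b - f a - (b - a) • f' a‖ := by
        rw [← norm_smul_of_nonneg (inv_nonneg.2 hba.le), smul_sub (b - a)⁻¹ (f b - f a),
          inv_smul_smul₀ hba.ne']
    _ ≤ (b - a)⁻¹ * (g b - g a - (b - a) * g' a) := by gcongr
    _ = (b - a)⁻¹ * (g b - g a) - g' a := by field_simp

theorem exists_last_crossing {u v : ℝ → ℝ} (hu : ContinuousOn u (Ici a))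
    (hv : ContinuousOn v (Ici a)) (ha : v a ≤ u a) (huv : ∀ᶠ x in atTop, u x < v x) :
    ∃ T ≥ a, u T = v T ∧ ∀ x > T, u x < v x := by
  obtain ⟨b, hb⟩ := eventually_atTop.1 huv
  have hab : a ≤ b := le_of_not_gt fun hba => (hb a hba.le).not_ge ha
  have hcompact : IsCompact {x ∈ Icc a b | v x ≤ u x} :=
    isCompact_Icc.of_isClosed_subset
      (isClosed_Icc.isClosed_le (hv.mono Icc_subset_Ici_self) (hu.mono Icc_subset_Ici_self))
      (sep_subset _ _)
  obtain ⟨T, ⟨⟨haT, -⟩, hT⟩, hTmax⟩ := hcompact.exists_isGreatest ⟨a, left_mem_Icc.2 hab, ha⟩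
  have hlt : ∀ x > T, u x < v x := by
    intro x hTx
    by_contra! hx
    rcases le_total b x with hbx | hxb
    · exact (hb x hbx).not_ge hx
    · exact (hTmax ⟨⟨haT.trans hTx.le, hxb⟩, hx⟩).not_gt hTx
  have hle : u T ≤ v T := by
    have hsub : closure (Ioi T) ⊆ Ici a := by simpa using haT
    exact le_on_closure (s := Ioi T) (fun x hx => (hlt x hx).le) (hu.mono hsub) (hv.mono hsub)
      (by simp)
  exact ⟨T, haT, hle.antisymm hT, hlt⟩

theorem norm_lt_of_norm_deriv_deriv_le_mul {q : ℝ → ℝ}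
    (hf : ∀ x ≥ a, HasDerivAt f (f' x) x) (hf' : ∀ x ≥ a, HasDerivAt f' (f'' x) x)
    (hg : ∀ x ≥ a, HasDerivAt g (g' x) x) (hg' : ∀ x ≥ a, HasDerivAt g' (g'' x) x)
    (hq : ∀ x ≥ a, 0 ≤ q x) (hfq : ∀ x ≥ a, ‖f'' x‖ ≤ q x * ‖f x‖)
    (hgq : ∀ x ≥ a, q x * g x ≤ g'' x) (hg0 : Tendsto g atTop (𝓝 0))
    (hfg : ∀ᶠ x in atTop, ‖f x‖ < g x) : ‖f a‖ < g a := by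
  by_contra! hga
  obtain ⟨T, haT, hT, hlt⟩ := exists_last_crossing
    (fun x hx => (hf x hx).continuousAt.norm.continuousWithinAt)
    (fun x hx => (hg x hx).continuousAt.continuousWithinAt) hga hfg
  have hf'' : ∀ x ≥ T, ‖f'' x‖ ≤ g'' x := fun x hx =>
    have hax := haT.trans hx
    have hle : ‖f x‖ ≤ g x := hx.eq_or_lt.elim (fun h => h ▸ hT.le) fun h => (hlt x h).le
    (hfq x hax).trans ((mul_le_mul_of_nonneg_left hle (hq x hax)).trans (hgq x hax))
  have hf0 : Tendsto f atTop (𝓝 0) :=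
    squeeze_zero_norm' (hfg.mono fun _ hx => hx.le) hg0
  have hf'_le : ∀ x ≥ T, ‖f' x‖ ≤ -g' x := fun x hx =>
    norm_deriv_le_neg_deriv_of_tendsto (fun y hy => hf y (haT.trans (hx.trans hy)))
      (fun y hy => hf' y (haT.trans (hx.trans hy))) (fun y hy => hg y (haT.trans (hx.trans hy)))
      (fun y hy => hg' y (haT.trans (hx.trans hy))) (fun y hy => hf'' y (hx.trans hy)) hf0 hg0
  have hgap : ‖f (T + 1) - f T‖ ≤ -g (T + 1) - -g T :=
    norm_sub_le_sub_of_norm_deriv_le (by linarith) (fun x hx => hf x (haT.trans hx.1))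
      (fun x hx => (hg x (haT.trans hx.1)).neg) (fun x hx => hf'_le x hx.1)
  linarith [norm_sub_norm_le (f T) (f (T + 1)), norm_sub_rev (f T) (f (T + 1)),
    hlt (T + 1) (lt_add_one T)]

end Comparison

/-- The leading-order decaying Liouville–Green (WKB) approximation to solutions of `y'' = Q y`,
normalised by taking `0` as base point of the action integral. It is used as a supersolution. -/
noncomputable def liouvilleGreen (Q : ℝ → ℝ) (x : ℝ) : ℝ :=
  Q x ^ (-(1 / 4) : ℝ) * Real.exp (-∫ t in (0 : ℝ)..x, √(Q t))

section LiouvilleGreen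

variable {Q Q' : ℝ → ℝ} {q'' x : ℝ}

theorem liouvilleGreen_pos (hx : 0 < Q x) : 0 < liouvilleGreen Q x :=
  mul_pos (Real.rpow_pos_of_pos hx _) (Real.exp_pos _)

theorem hasDerivAt_liouvilleGreen (hQc : Continuous Q) (hQ : HasDerivAt Q (Q' x) x)
    (hx : 0 < Q x) :
    HasDerivAt (liouvilleGreen Q) (-((√(Q x) + Q' x / (4 * Q x)) * liouvilleGreen Q x)) x := by
  have hint : HasDerivAt (fun y => ∫ t in (0 : ℝ)..y, √(Q t)) √(Q x) x :=
    hQc.sqrt.integral_hasStrictDerivAt 0 x |>.hasDerivAt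
  refine ((hQ.rpow_const (p := -(1 / 4)) (.inl hx.ne')).mul hint.neg.exp).congr_deriv ?_
  simp only [liouvilleGreen, Pi.neg_apply, Real.rpow_sub_one hx.ne']
  field_simp
  ring

theorem hasDerivAt_deriv_liouvilleGreen (hQc : Continuous Q) (hQ : HasDerivAt Q (Q' x) x)
    (hQ' : HasDerivAt Q' q'' x) (hx : 0 < Q x) :
    HasDerivAt (fun y => -((√(Q y) + Q' y / (4 * Q y)) * liouvilleGreen Q y))
      ((Q x - q'' / (4 * Q x) + 5 / 16 * (Q' x / Q x) ^ 2) * liouvilleGreen Q x) x := by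
  have hrate : HasDerivAt (fun y => √(Q y) + Q' y / (4 * Q y))
      (Q' x / (2 * √(Q x)) + (q'' * (4 * Q x) - Q' x * (4 * Q' x)) / (4 * Q x) ^ 2) x :=
    (hQ.sqrt hx.ne').add (hQ'.div (hQ.const_mul 4) (by positivity))
  refine (hrate.mul (hasDerivAt_liouvilleGreen hQc hQ hx)).neg.congr_deriv ?_
  have hsqrt : 0 < √(Q x) := Real.sqrt_pos.2 hx
  have hsq : Q x = √(Q x) ^ 2 := (Real.sq_sqrt hx.le).symm
  generalize √(Q x) = s at *
  rw [hsq]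
  field_simp
  ring

theorem tendsto_liouvilleGreen_zero (hQ : Tendsto Q atTop atTop) :
    Tendsto (liouvilleGreen Q) atTop (𝓝 0) := by
  refine squeeze_zero' ?_ ?_ ((tendsto_rpow_neg_atTop (by norm_num : (0 : ℝ) < 1 / 4)).comp hQ)
  · filter_upwards [hQ.eventually_gt_atTop 0] with x hx using (liouvilleGreen_pos hx).le
  · filter_upwards [hQ.eventually_gt_atTop 0, eventually_ge_atTop 0] with x hx hx0
    refine mul_le_of_le_one_right (Real.rpow_nonneg hx.le _) (Real.exp_le_one_iff.2 ?_)
    exact neg_nonpos.2 (intervalIntegral.integral_nonneg hx0 fun t _ => Real.sqrt_nonneg _)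

theorem norm_lt_mul_liouvilleGreen {E : Type*} [NormedAddCommGroup E] [NormedSpace ℝ E]
    {f f' f'' : ℝ → E} {Q'' q : ℝ → ℝ} {a M : ℝ} (hQc : Continuous Q)
    (hQ : ∀ x ≥ a, HasDerivAt Q (Q' x) x) (hQ' : ∀ x ≥ a, HasDerivAt Q' (Q'' x) x)
    (hQpos : ∀ x ≥ a, 0 < Q x) (hQtop : Tendsto Q atTop atTop)
    (hq : ∀ x ≥ a, 0 ≤ q x) (hqQ : ∀ x ≥ a, q x ≤ Q x - Q'' x / (4 * Q x))
    (hf : ∀ x ≥ a, HasDerivAt f (f' x) x) (hf' : ∀ x ≥ a, HasDerivAt f' (f'' x) x)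
    (hfq : ∀ x ≥ a, ‖f'' x‖ ≤ q x * ‖f x‖)
    (hfQ : ∀ᶠ x in atTop, ‖f x‖ < M * liouvilleGreen Q x) :
    ‖f a‖ < M * liouvilleGreen Q a := by
  have hM : 0 ≤ M := by
    obtain ⟨x, hx, hax⟩ := (hfQ.and (eventually_ge_atTop a)).exists
    exact (pos_of_mul_pos_left ((norm_nonneg _).trans_lt hx)
      (liouvilleGreen_pos (hQpos x hax)).le).le
  refine norm_lt_of_norm_deriv_deriv_le_mul hf hf'
    (fun x hx => (hasDerivAt_liouvilleGreen hQc (hQ x hx) (hQpos x hx)).const_mul M)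
    (fun x hx =>
      (hasDerivAt_deriv_liouvilleGreen hQc (hQ x hx) (hQ' x hx) (hQpos x hx)).const_mul M)
    hq hfq (fun x hx => ?_) (by simpa using (tendsto_liouvilleGreen_zero hQtop).const_mul M) hfQ
  have hG := liouvilleGreen_pos (hQpos x hx)
  have hcoef : q x ≤ Q x - Q'' x / (4 * Q x) + 5 / 16 * (Q' x / Q x) ^ 2 :=
    le_add_of_le_of_nonneg (hqQ x hx) (by positivity)
  calc q x * (M * liouvilleGreen Q x) = M * (q x * liouvilleGreen Q x) := by ring
    _ ≤ _ := by gcongr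

end LiouvilleGreen

section Beta

variable {a b c p ν : ℝ}

theorem integral_rpow_mul_one_sub_rpow (ha : 0 < a) (hb : 0 < b) :
    ∫ x in Ioo (0 : ℝ) 1, x ^ (a - 1) * (1 - x) ^ (b - 1) = beta a b := by
  have hcast : EqOn (fun x : ℝ => (x : ℂ) ^ ((a : ℂ) - 1) * (1 - (x : ℂ)) ^ ((b : ℂ) - 1))
      (fun x : ℝ => ((x ^ (a - 1) * (1 - x) ^ (b - 1) : ℝ) : ℂ)) (Ioo 0 1) := by
    intro x hx
    simp only [ofReal_mul, ofReal_cpow hx.1.le, ofReal_cpow (sub_nonneg.2 hx.2.le), ofReal_sub,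
      ofReal_one]
  rw [beta_eq_betaIntegralReal a b ha hb, betaIntegral,
    intervalIntegral.integral_of_le zero_le_one, integral_Ioc_eq_integral_Ioo,
    setIntegral_congr_fun measurableSet_Ioo hcast, integral_complex_ofReal, ofReal_re]

theorem image_div_one_add_Ioi : (fun t : ℝ => t / (1 + t)) '' Ioi 0 = Ioo 0 1 := by
  ext s
  constructor
  · rintro ⟨t, ht : 0 < t, rfl⟩
    exact ⟨by positivity, by rw [div_lt_one (by positivity)]; linarith⟩
  · rintro ⟨hs0, hs1⟩
    have hs : 0 < 1 - s := sub_pos.2 hs1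
    exact ⟨s / (1 - s), div_pos hs0 hs, by field_simp; ring⟩

theorem injOn_div_one_add_Ioi : InjOn (fun t : ℝ => t / (1 + t)) (Ioi 0) := by
  intro s (hs : 0 < s) t (ht : 0 < t) hst
  rw [div_eq_div_iff (by positivity) (by positivity)] at hst
  linarith

theorem integral_rpow_mul_one_add_rpow_neg (ha : 0 < a) (hb : 0 < b) :
    ∫ t in Ioi (0 : ℝ), t ^ (a - 1) * (1 + t) ^ (-(a + b)) = beta a b := by
  have hderiv (t : ℝ) (ht : t ∈ Ioi 0) :
      HasDerivWithinAt (fun t : ℝ => t / (1 + t)) (1 / (1 + t) ^ 2) (Ioi 0) t := by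
    have ht1 : 1 + t ≠ 0 := (add_pos one_pos ht).ne'
    have hdiv := (hasDerivAt_id t).div ((hasDerivAt_id t).const_add 1) ht1
    refine hdiv.hasDerivWithinAt.congr_deriv ?_
    simp
  rw [← integral_rpow_mul_one_sub_rpow ha hb, ← image_div_one_add_Ioi,
    integral_image_eq_integral_abs_deriv_smul measurableSet_Ioi hderiv injOn_div_one_add_Ioi]
  refine setIntegral_congr_fun measurableSet_Ioi fun t (ht : 0 < t) => ?_
  have ht1 : 0 < 1 + t := by positivity
  have hsub : 1 - t / (1 + t) = (1 + t)⁻¹ := by field_simp; ring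
  have hexp : -(a + b) = -(2 : ℕ) + -(a - 1) + -(b - 1) := by push_cast; ring
  simp only [smul_eq_mul]
  rw [hsub, abs_of_pos (by positivity), Real.div_rpow ht.le ht1.le, Real.inv_rpow ht1.le, hexp,
    Real.rpow_add ht1, Real.rpow_add ht1, Real.rpow_neg ht1.le, Real.rpow_neg ht1.le,
    Real.rpow_neg ht1.le, Real.rpow_natCast]
  ring

theorem integral_one_sub_rpow_rpow (hp : 0 < p) (hc : -1 < c) :
    ∫ t in (0 : ℝ)..1, (1 - t ^ p) ^ c = p⁻¹ * beta p⁻¹ (c + 1) := by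
  rw [← integral_rpow_mul_one_sub_rpow (inv_pos.2 hp) (by linarith), ← integral_const_mul,
    intervalIntegral.integral_of_le zero_le_one, integral_Ioc_eq_integral_Ioo, ← Ioi_inter_Iio,
    ← setIntegral_indicator measurableSet_Iio, ← setIntegral_indicator measurableSet_Iio,
    ← integral_comp_rpow_Ioi_of_pos (inv_pos.2 hp)]
  refine setIntegral_congr_fun measurableSet_Ioi fun x (hx : 0 < x) => ?_
  have hx1 : x ^ p⁻¹ < 1 ↔ x < 1 := Real.rpow_lt_one_iff' hx.le (inv_pos.2 hp)
  simp only [indicator, mem_Iio, hx1, Real.rpow_inv_rpow hx.le hp.ne', smul_eq_mul,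
    add_sub_cancel_right, mul_ite, mul_zero, mul_assoc]

theorem integral_rpow_add_one_rpow_neg (hp : 0 < p) (hc : p⁻¹ < c) :
    ∫ t in Ioi (0 : ℝ), (t ^ p + 1) ^ (-c) = p⁻¹ * beta p⁻¹ (c - p⁻¹) := by
  rw [← integral_rpow_mul_one_add_rpow_neg (inv_pos.2 hp) (sub_pos.2 hc), ← integral_const_mul,
    ← integral_comp_rpow_Ioi_of_pos (g := fun t => (t ^ p + 1) ^ (-c)) (inv_pos.2 hp)]
  refine setIntegral_congr_fun measurableSet_Ioi fun x (hx : 0 < x) => ?_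
  simp only [Real.rpow_inv_rpow hx.le hp.ne', smul_eq_mul, add_sub_cancel, mul_assoc, add_comm x]

theorem integral_rpow_add_rpow_neg (hp : 0 < p) (hc : p⁻¹ < c) (hν : 0 < ν) :
    ∫ t in Ioi (0 : ℝ), (t ^ p + ν) ^ (-c) = ν ^ (p⁻¹ - c) * (p⁻¹ * beta p⁻¹ (c - p⁻¹)) := by
  have hscale : 0 < ν ^ p⁻¹ := Real.rpow_pos_of_pos hν _
  have hsubst := integral_comp_mul_left_Ioi (fun t : ℝ => (t ^ p + ν) ^ (-c)) 0 hscale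
  have hhom : EqOn (fun s : ℝ => ((ν ^ p⁻¹ * s) ^ p + ν) ^ (-c))
      (fun s => ν ^ (-c) * (s ^ p + 1) ^ (-c)) (Ioi 0) := by
    intro s (hs : 0 < s)
    have : (ν ^ p⁻¹ * s) ^ p + ν = ν * (s ^ p + 1) := by
      rw [Real.mul_rpow hscale.le hs.le, Real.rpow_inv_rpow hν.le hp.ne']
      ring
    simp only [this]
    exact Real.mul_rpow hν.le (by positivity)
  rw [setIntegral_congr_fun measurableSet_Ioi hhom, integral_const_mul,
    integral_rpow_add_one_rpow_neg hp hc, mul_zero, smul_eq_mul] at hsubst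
  rw [← mul_inv_cancel_left₀ hscale.ne' (∫ t in Ioi (0 : ℝ), (t ^ p + ν) ^ (-c)), ← hsubst,
    ← mul_assoc, ← Real.rpow_add hν, ← sub_eq_add_neg]

theorem integrableOn_rpow_add_rpow_neg (hp : 0 < p) (hc : p⁻¹ < c) (hν : 0 < ν) :
    IntegrableOn (fun t : ℝ => (t ^ p + ν) ^ (-c)) (Ioi 0) := by
  refine Integrable.of_integral_ne_zero ?_
  rw [integral_rpow_add_rpow_neg hp hc hν]
  have := beta_pos (inv_pos.2 hp) (sub_pos.2 hc)
  positivity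

theorem beta_sub_mul_cos_pi_mul (ha : 0 < a) (ha' : a < 1 / 2) :
    beta a (1 / 2 - a) * Real.cos (Real.pi * a) = (2 * a + 1) * beta a (3 / 2) := by
  have hcos : 0 < Real.cos (Real.pi * a) :=
    Real.cos_pos_of_mem_Ioo ⟨by nlinarith [Real.pi_pos], by nlinarith [Real.pi_pos]⟩
  have hreflect : Real.Gamma (1 / 2 - a) * Real.Gamma (1 / 2 + a) * Real.cos (Real.pi * a)
      = Real.Gamma (1 / 2) * Real.Gamma (1 / 2) := by
    have h := Real.Gamma_mul_Gamma_one_sub (1 / 2 - a)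
    rw [show 1 - (1 / 2 - a) = 1 / 2 + a by ring,
      show Real.pi * (1 / 2 - a) = Real.pi / 2 - Real.pi * a by ring, Real.sin_pi_div_two_sub] at h
    rw [h, Real.Gamma_one_half_eq, Real.mul_self_sqrt Real.pi_pos.le, div_mul_cancel₀ _ hcos.ne']
  have hthree : Real.Gamma (3 / 2) = 1 / 2 * Real.Gamma (1 / 2) := by
    rw [← Real.Gamma_add_one (by norm_num)]; norm_num
  have hshift : Real.Gamma (a + 3 / 2) = (1 / 2 + a) * Real.Gamma (1 / 2 + a) := by
    rw [← Real.Gamma_add_one (by positivity)]; ring_nf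
  have hplus : 0 < Real.Gamma (1 / 2 + a) := Real.Gamma_pos_of_pos (by positivity)
  rw [beta, beta, add_sub_cancel, hthree, hshift]
  generalize Real.Gamma (1 / 2 - a) = G₁, Real.Gamma (1 / 2 + a) = G₂ at *
  field_simp
  linear_combination (1 + 2 * a) * hreflect

end Beta

/-- The regularised action `∫₀^∞ (√(t ^ p + 1) - t ^ (p / 2)) dt` of the potential `t ^ p + 1`,
written as an integral over `[0, 1]`. The formula is meant for `p > 2`, where the action is finite
and the cosine is positive; at `p = 2` it is a junk `0`. -/
noncomputable def actionConst (p : ℝ) : ℝ :=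
  (∫ t in (0 : ℝ)..1, √(1 - t ^ p)) / Real.cos (Real.pi / p)

section Action

variable {p ν x : ℝ}

theorem cos_pi_div_pos (hp : 2 < p) : 0 < Real.cos (Real.pi / p) := by
  have hp0 : 0 < p := by linarith
  have hlt : Real.pi / p < Real.pi / 2 := div_lt_div_of_pos_left Real.pi_pos two_pos hp
  exact Real.cos_pos_of_mem_Ioo ⟨by linarith [Real.pi_pos, div_pos Real.pi_pos hp0], hlt⟩

theorem actionConst_nonneg (hp : 2 < p) : 0 ≤ actionConst p :=
  div_nonneg (intervalIntegral.integral_nonneg zero_le_one fun _ _ => Real.sqrt_nonneg _)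
    (cos_pi_div_pos hp).le

theorem actionConst_three : actionConst 3 = 2 * ∫ t in (0 : ℝ)..1, √(1 - t ^ 3) := by
  rw [actionConst, Real.cos_pi_div_three, div_div_eq_mul_div, div_one, mul_comm]
  norm_cast

theorem actionConst_eq_beta (hp : 2 < p) :
    actionConst p = (p + 2)⁻¹ * beta p⁻¹ (1 / 2 - p⁻¹) := by
  have hp0 : 0 < p := by linarith
  have hinv : p⁻¹ < 1 / 2 := by rw [one_div]; gcongr
  have hbeta := beta_sub_mul_cos_pi_mul (inv_pos.2 hp0) hinv
  simp only [actionConst, Real.sqrt_eq_rpow]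
  rw [div_eq_iff (cos_pi_div_pos hp).ne', integral_one_sub_rpow_rpow hp0 (by norm_num), mul_assoc,
    div_eq_mul_inv Real.pi, hbeta, show (1 / 2 + 1 : ℝ) = 3 / 2 by norm_num]
  field_simp
  ring

theorem integral_rpow_add_rpow_neg_half (hp : 2 < p) (hν : 0 < ν) :
    p / (p + 2) * ν * ∫ t in Ioi (0 : ℝ), (t ^ p + ν) ^ (-(1 / 2) : ℝ)
      = actionConst p * ν ^ (1 / 2 + 1 / p) := by
  have hp0 : 0 < p := by linarith
  have hinv : p⁻¹ < 1 / 2 := by rw [one_div]; gcongr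
  have hexp : 1 / 2 + 1 / p = p⁻¹ - 1 / 2 + 1 := by ring
  rw [integral_rpow_add_rpow_neg hp0 hinv hν, actionConst_eq_beta hp, hexp,
    Real.rpow_add_one hν.ne']
  field_simp

theorem hasDerivAt_mul_sqrt_rpow_add (hp : 1 ≤ p) (hν : 0 < ν) (hx : 0 ≤ x) :
    HasDerivAt (fun t => t * √(t ^ p + ν))
      ((p + 2) / 2 * √(x ^ p + ν) - p / 2 * ν * (x ^ p + ν) ^ (-(1 / 2) : ℝ)) x := by
  have hQ : 0 < x ^ p + ν := by positivity
  have hpow : x * x ^ (p - 1) = x ^ p := by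
    rw [mul_comm, ← Real.rpow_add_one' hx (by linarith), sub_add_cancel]
  refine ((hasDerivAt_id x).mul
    (((Real.hasDerivAt_rpow_const (.inr hp)).add_const ν).sqrt hQ.ne')).congr_deriv ?_
  have hsqrt : 0 < √(x ^ p + ν) := Real.sqrt_pos.2 hQ
  have hsq : √(x ^ p + ν) ^ 2 = x ^ p + ν := Real.sq_sqrt hQ.le
  rw [Real.rpow_neg hQ.le, ← Real.sqrt_eq_rpow]
  simp only [id]
  generalize √(x ^ p + ν) = s at *
  field_simp
  linear_combination p * hpow - p * hsq

theorem integral_sqrt_rpow_add (hp : 1 ≤ p) (hν : 0 < ν) (hx : 0 ≤ x) :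
    ∫ t in (0 : ℝ)..x, √(t ^ p + ν) = 2 / (p + 2) * (x * √(x ^ p + ν))
      + p / (p + 2) * ν * ∫ t in (0 : ℝ)..x, (t ^ p + ν) ^ (-(1 / 2) : ℝ) := by
  have hp0 : 0 ≤ p := by linarith
  have hnonneg {t : ℝ} (ht : t ∈ uIcc 0 x) : 0 ≤ t := (uIcc_of_le hx ▸ ht).1
  have hQc : Continuous fun t : ℝ => t ^ p + ν := (Real.continuous_rpow_const hp0).add_const ν
  have hsqrt : IntervalIntegrable (fun t => √(t ^ p + ν)) volume 0 x :=
    hQc.sqrt.intervalIntegrable _ _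
  have hrpow : IntervalIntegrable (fun t => (t ^ p + ν) ^ (-(1 / 2) : ℝ)) volume 0 x :=
    (hQc.continuousOn.rpow_const fun t ht =>
      .inl (by have := hnonneg ht; positivity)).intervalIntegrable
  have hparts := intervalIntegral.integral_eq_sub_of_hasDerivAt
    (fun t ht => hasDerivAt_mul_sqrt_rpow_add hp hν (hnonneg ht))
    ((hsqrt.const_mul ((p + 2) / 2)).sub (hrpow.const_mul (p / 2 * ν)))
  rw [intervalIntegral.integral_sub (hsqrt.const_mul _) (hrpow.const_mul _),
    intervalIntegral.integral_const_mul, intervalIntegral.integral_const_mul, zero_mul,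
    sub_zero] at hparts
  rw [← hparts]
  field_simp
  ring

theorem sqrt_sq_add_le_add_div {s : ℝ} (hs : 0 < s) (hν : 0 ≤ ν) : √(s ^ 2 + ν) ≤ s + ν / s := by
  have hsq : (s + ν / s) ^ 2 = s ^ 2 + ν + (ν + (ν / s) ^ 2) := by field_simp
  exact Real.sqrt_le_iff.2 ⟨by positivity, hsq ▸ le_add_of_nonneg_right (by positivity)⟩

theorem mul_sqrt_rpow_add_sub_mem_Icc (hν : 0 ≤ ν) (hx : 0 < x) :
    x * √(x ^ p + ν) - x ^ (p / 2 + 1) ∈ Icc 0 (ν * x ^ (-(p / 2 - 1))) := by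
  have hs : 0 < x ^ (p / 2) := by positivity
  have hsq : x ^ p = (x ^ (p / 2)) ^ 2 := by
    rw [← Real.rpow_mul_natCast hx.le, Nat.cast_two, div_mul_cancel₀ _ two_ne_zero]
  rw [neg_sub, Real.rpow_sub hx, Real.rpow_one, Real.rpow_add_one hx.ne', hsq]
  generalize x ^ (p / 2) = s at hs
  constructor
  · have hlower : s ≤ √(s ^ 2 + ν) := Real.le_sqrt_of_sq_le (by linarith)
    rw [mul_comm s, ← mul_sub]
    exact mul_nonneg hx.le (sub_nonneg.2 hlower)
  · calc x * √(s ^ 2 + ν) - s * x ≤ x * (s + ν / s) - s * x := by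
          gcongr; exact sqrt_sq_add_le_add_div hs hν
      _ = ν * (x / s) := by ring

theorem tendsto_mul_sqrt_rpow_add_sub (hp : 2 < p) (hν : 0 ≤ ν) :
    Tendsto (fun x : ℝ => x * √(x ^ p + ν) - x ^ (p / 2 + 1)) atTop (𝓝 0) := by
  have hdecay : Tendsto (fun x : ℝ => ν * x ^ (-(p / 2 - 1))) atTop (𝓝 0) := by
    simpa using (tendsto_rpow_neg_atTop (by linarith : 0 < p / 2 - 1)).const_mul ν
  have hmem := (eventually_gt_atTop 0).mono fun x hx => mul_sqrt_rpow_add_sub_mem_Icc (p := p) hν hx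
  exact squeeze_zero' (hmem.mono fun _ h => h.1) (hmem.mono fun _ h => h.2) hdecay

theorem tendsto_integral_sqrt_rpow_add_sub (hp : 2 < p) (hν : 0 < ν) :
    Tendsto (fun x => (∫ t in (0 : ℝ)..x, √(t ^ p + ν)) - 2 / (p + 2) * x ^ (p / 2 + 1)) atTop
      (𝓝 (actionConst p * ν ^ (1 / 2 + 1 / p))) := by
  have hinv : p⁻¹ < 1 / 2 := by rw [one_div]; gcongr
  have hintegral := (intervalIntegral_tendsto_integral_Ioi 0
    (integrableOn_rpow_add_rpow_neg (by linarith) hinv hν) tendsto_id).const_mul (p / (p + 2) * ν)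
  have hsum := ((tendsto_mul_sqrt_rpow_add_sub hp hν.le).const_mul (2 / (p + 2))).add hintegral
  rw [mul_zero, zero_add, integral_rpow_add_rpow_neg_half hp hν] at hsum
  refine hsum.congr' ?_
  filter_upwards [eventually_ge_atTop 0] with x hx
  rw [integral_sqrt_rpow_add (by linarith) hν hx]
  simp only [id]
  ring

theorem tendsto_rpow_add_rpow_neg_mul_rpow (hp : 0 < p) (c : ℝ) :
    Tendsto (fun x : ℝ => (x ^ p + ν) ^ (-c) * x ^ (p * c)) atTop (𝓝 1) := by
  have hratio : Tendsto (fun x : ℝ => 1 + ν * (x ^ p)⁻¹) atTop (𝓝 1) := by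
    simpa using ((tendsto_rpow_atTop hp).inv_tendsto_atTop.const_mul ν).const_add 1
  have hpow := hratio.rpow_const (p := -c) (.inl one_ne_zero)
  rw [Real.one_rpow] at hpow
  refine hpow.congr' ?_
  filter_upwards [eventually_gt_atTop 0, hratio.eventually_const_lt one_pos] with x hx hx1
  have hxp : 0 < x ^ p := by positivity
  have hfactor : x ^ p + ν = (1 + ν * (x ^ p)⁻¹) * x ^ p := by field_simp
  rw [hfactor, Real.mul_rpow hx1.le hxp.le, Real.rpow_mul hx.le, mul_assoc,
    ← Real.rpow_add hxp, neg_add_cancel, Real.rpow_zero, mul_one]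

theorem tendsto_liouvilleGreen_rpow_add (hp : 2 < p) (hν : 0 < ν) :
    Tendsto (fun x => liouvilleGreen (fun t => t ^ p + ν) x
        * (x ^ (p / 4) * Real.exp (2 / (p + 2) * x ^ (p / 2 + 1)))) atTop
      (𝓝 (Real.exp (-(actionConst p * ν ^ (1 / 2 + 1 / p))))) := by
  have hlim := (tendsto_rpow_add_rpow_neg_mul_rpow (ν := ν) (by linarith : 0 < p) (1 / 4)).mul
    (tendsto_integral_sqrt_rpow_add_sub hp hν).neg.rexp
  rw [one_mul] at hlim
  refine hlim.congr fun x => ?_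
  rw [liouvilleGreen, neg_sub, sub_eq_add_neg, Real.exp_add]
  ring_nf

end Action

/-- `u` solves `u'' = (x ^ p + lam) u` on `[0, ∞)` and is the solution recessive at `+∞`, normalised
by its leading Liouville–Green asymptotics. -/
structure IsRecessiveSolution (p : ℝ) (lam : ℂ) (u : ℝ → ℂ) : Prop where
  differentiableAt : ∀ x ≥ 0, DifferentiableAt ℝ u x
  hasDerivAt_deriv : ∀ x ≥ 0, HasDerivAt (deriv u) (((x ^ p : ℝ) + lam) * u x) x
  tendsto_mul : Tendsto
    (fun x => u x * (x ^ (p / 4) * Real.exp (2 / (p + 2) * x ^ (p / 2 + 1)) : ℝ)) atTop (𝓝 1)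

section RecessiveSolution

variable {p ν : ℝ} {lam : ℂ} {u : ℝ → ℂ}

theorem IsRecessiveSolution.eventually_norm_lt (hu : IsRecessiveSolution p lam u) (hp : 2 < p)
    (hν : 0 < ν) : ∀ᶠ x in atTop,
      ‖u x‖ < 2 * Real.exp (actionConst p * ν ^ (1 / 2 + 1 / p))
        * liouvilleGreen (fun t => t ^ p + ν) x := by
  have hright := (tendsto_liouvilleGreen_rpow_add hp hν).const_mul
    (2 * Real.exp (actionConst p * ν ^ (1 / 2 + 1 / p)))
  rw [mul_assoc, ← Real.exp_add, add_neg_cancel, Real.exp_zero, mul_one] at hright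
  have hleft := hu.tendsto_mul.norm
  rw [norm_one] at hleft
  filter_upwards [hleft.eventually_lt hright one_lt_two, eventually_gt_atTop 0] with x hx hx0
  rw [norm_mul, norm_real, Real.norm_of_nonneg (by positivity),
    ← mul_assoc (2 * Real.exp _)] at hx
  exact lt_of_mul_lt_mul_right hx (by positivity)

theorem mul_sub_one_mul_rpow_sub_two_div_le {x : ℝ} (hp : 2 < p) (hν : 1 ≤ ν) (hx : 0 ≤ x) :
    p * (p - 1) * x ^ (p - 2) / (4 * (x ^ p + ν)) ≤ p ^ 2 := by
  have hpow : x ^ (p - 2) ≤ x ^ p + ν := by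
    rcases le_total x 1 with hx1 | hx1
    · exact (Real.rpow_le_one hx hx1 (by linarith)).trans
        (hν.trans (le_add_of_nonneg_left (by positivity)))
    · exact (Real.rpow_le_rpow_of_exponent_le hx1 (sub_le_self p two_pos.le)).trans (by linarith)
  have hxp : 0 ≤ x ^ (p - 2) := by positivity
  rw [div_le_iff₀ (by positivity)]
  nlinarith [mul_nonneg hxp (sq_nonneg p), mul_nonneg hxp (by linarith : 0 ≤ p)]

theorem IsRecessiveSolution.norm_apply_zero_le (hu : IsRecessiveSolution p lam u) (hp : 2 < p) :
    ‖u 0‖ ≤ 2 * Real.exp (actionConst p * (‖lam‖ + p ^ 2) ^ (1 / 2 + 1 / p)) := by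
  set ν := ‖lam‖ + p ^ 2 with hν
  have hν1 : 1 ≤ ν := by nlinarith [hν, norm_nonneg lam]
  have hν0 : 0 < ν := by linarith
  have hQ'' : ∀ x : ℝ, HasDerivAt (fun x => p * x ^ (p - 1)) (p * (p - 1) * x ^ (p - 2)) x := by
    intro x
    rw [mul_assoc, show p - 2 = p - 1 - 1 by ring]
    exact (Real.hasDerivAt_rpow_const (.inr (by linarith))).const_mul p
  have hcoef : ∀ x ≥ 0,
      x ^ p + ‖lam‖ ≤ x ^ p + ν - p * (p - 1) * x ^ (p - 2) / (4 * (x ^ p + ν)) := by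
    intro x hx
    linarith [hν, mul_sub_one_mul_rpow_sub_two_div_le hp hν1 hx]
  have hode : ∀ x ≥ 0, ‖((x ^ p : ℝ) + lam) * u x‖ ≤ (x ^ p + ‖lam‖) * ‖u x‖ := by
    intro x hx
    rw [norm_mul]
    gcongr
    refine (norm_add_le _ _).trans_eq ?_
    rw [norm_real, Real.norm_of_nonneg (Real.rpow_nonneg hx p)]
  have hlt : ‖u 0‖ < 2 * Real.exp (actionConst p * ν ^ (1 / 2 + 1 / p))
      * liouvilleGreen (fun t => t ^ p + ν) 0 :=
    norm_lt_mul_liouvilleGreen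
      ((Real.continuous_rpow_const (by linarith)).add_const ν)
      (fun x _ => (Real.hasDerivAt_rpow_const (.inr (by linarith))).add_const ν)
      (fun x _ => hQ'' x) (fun x (hx : 0 ≤ x) => by positivity)
      (tendsto_atTop_add_const_right _ ν (tendsto_rpow_atTop (by linarith)))
      (fun x (hx : 0 ≤ x) => by positivity) hcoef
      (fun x hx => (hu.differentiableAt x hx).hasDerivAt) hu.hasDerivAt_deriv hode
      (hu.eventually_norm_lt hp hν0)
  refine hlt.le.trans (mul_le_of_le_one_right (by positivity) ?_)
  rw [liouvilleGreen, intervalIntegral.integral_same, neg_zero, Real.exp_zero, mul_one,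
    Real.zero_rpow (by linarith), zero_add]
  exact Real.rpow_le_one_of_one_le_of_nonpos hν1 (by norm_num)

end RecessiveSolution

theorem IsStdSolutionFamily.isRecessiveSolution {f : ℂ → ℂ → ℂ} (hf : IsStdSolutionFamily f)
    (lam : ℂ) : IsRecessiveSolution 3 lam (fun x => f x lam) := by
  obtain ⟨hentire, hode⟩ := hf.1 lam
  have hderiv (x : ℝ) : HasDerivAt (fun x : ℝ => f x lam) (deriv (fun z => f z lam) x) x :=
    (hentire x).hasDerivAt.comp_ofReal
  refine ⟨fun x _ => (hderiv x).differentiableAt, fun x _ => ?_, ?_⟩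
  · rw [funext fun y => (hderiv y).deriv]
    have h := (hentire.contDiff.differentiable_deriv_two x).hasDerivAt.comp_ofReal
    rw [hode] at h
    exact_mod_cast h
  · obtain ⟨C, -, R, -, hC⟩ := hf.2 (3 * Real.pi / 5) (by positivity) {lam} isCompact_singleton
    have hdecay : Tendsto (fun x : ℝ => C * x ^ (-(1 / 2) : ℝ)) atTop (𝓝 0) := by
      simpa using (tendsto_rpow_neg_atTop one_half_pos).const_mul C
    refine tendsto_iff_norm_sub_tendsto_zero.2 (squeeze_zero' (.of_forall fun _ => norm_nonneg _)
      ?_ hdecay)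
    filter_upwards [eventually_gt_atTop 0, eventually_ge_atTop R] with x hx hxR
    have hnorm : ‖(x : ℂ)‖ = x := by rw [norm_real, Real.norm_of_nonneg hx.le]
    have hbound := hC lam rfl x (by rwa [hnorm]) (by simp [arg_ofReal_of_nonneg hx.le])
    rw [hnorm] at hbound
    have hscale : ((x ^ ((3 : ℝ) / 4) * Real.exp (2 / (3 + 2) * x ^ ((3 : ℝ) / 2 + 1)) : ℝ) : ℂ)
        = x ^ ((3 : ℂ) / 4) * cexp (2 / 5 * x ^ ((5 : ℂ) / 2)) := by
      push_cast [ofReal_cpow hx.le]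
      norm_num
    rwa [hscale, ← mul_assoc]

theorem std_solution_global_bound_general {p : ℝ} (hp : 2 < p) :
    ∃ C > (0 : ℝ), ∀ (lam : ℂ) (u : ℝ → ℂ), IsRecessiveSolution p lam u →
      ‖u 0‖ ≤ C * Real.exp (actionConst p * ‖lam‖ ^ (1 / 2 + 1 / p)) := by
  have hinv : 1 / p ≤ 1 / 2 := by gcongr
  refine ⟨2 * Real.exp (actionConst p * (p ^ 2) ^ (1 / 2 + 1 / p)), by positivity,
    fun lam u hu => (hu.norm_apply_zero_le hp).trans ?_⟩
  rw [mul_assoc, ← Real.exp_add, ← mul_add, add_comm (_ ^ _)]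
  gcongr
  · exact actionConst_nonneg hp
  · exact Real.rpow_add_le_add_rpow (by positivity) (by positivity) (by positivity) (by linarith)

/-- Global upper bound: for every `K̃ > K`, `|f(0,λ)| ≤ C e^{K̃ |λ|^{5/6}}` on all of ℂ. -/
theorem std_solution_global_bound (f : ℂ → ℂ → ℂ) (hf : IsStdSolutionFamily f)
    (K : ℝ) (hK : K = 2 * ∫ t in (0:ℝ)..1, Real.sqrt (1 - t ^ 3)) :
    ∀ Ktilde : ℝ, K < Ktilde → ∃ C > (0 : ℝ), ∀ lam : ℂ,
      ‖f 0 lam‖ ≤ C * Real.exp (Ktilde * ‖lam‖ ^ ((5 : ℝ) / 6)) := by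
  intro Ktilde hKt
  obtain ⟨C, hC, hbound⟩ := std_solution_global_bound_general (p := 3) (by norm_num)
  refine ⟨C, hC, fun lam => ?_⟩
  have hrec := hbound lam _ (hf.isRecessiveSolution lam)
  rw [actionConst_three, ← hK, ofReal_zero,
    show (1 / 2 + 1 / 3 : ℝ) = 5 / 6 by norm_num] at hrec
  exact hrec.trans (by gcongr)
end

section
/- Let f be a standard solution family, set ω = e^{2πi/5}, α = e^{iπ/10}, ψ₊(z,λ) = f(α·z, −α^{−2}·λ) and ψ₋(z,λ) = f(−α^{−1}·z, −α²·λ). Then for every δ > 0 there exists R > 0 such that for all λ ∈ ℂ with |λ| ≥ R and |arg λ| ≤ π − δ: if ψ₋(0,λ) = −ω·ψ₊(0,λ), then λ is an eigenvalue of the imaginary cubic oscillator. -/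
open Complex MeasureTheory

/-- `lam` is an eigenvalue of the imaginary cubic oscillator `H = p² + i x³`. -/
def IsEigenvalueICO (lam : ℂ) : Prop :=
  ∃ ψ : ℝ → ℂ, ψ ≠ 0 ∧ ContDiff ℝ 2 ψ ∧
    Integrable (fun x : ℝ => ‖ψ x‖ ^ 2) ∧
    ∀ x : ℝ, -(deriv (deriv ψ) x) + Complex.I * (x : ℂ) ^ 3 * ψ x = lam * ψ x

/-!
Rotating `z` by a fifth root of unity permutes the solutions of `y'' = (z³ + λ) y`, and the
rotations of `f` by `ω` and `ω⁻¹` are both dominant on `ℝ₊`. In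
`u z = f (ω z, ω⁻² λ) + ω f (ω⁻¹ z, ω² λ)` the dominant terms cancel, so `u` has zero Wronskian
with the recessive solution `f (·, λ)` and is a multiple of it. The matching condition says
`u 0 = 0`, whereas `f (0, λ) ≠ 0` off the negative axis by an energy argument. Hence `u = 0`, that
is, the two rotations are proportional. On the imaginary axis one of them is recessive at `+i∞`
and the other at `-i∞`, so either one, read along `z = i x`, is an eigenfunction of the oscillator.
-/

open Filter Asymptotics
open scoped Topology Real ComplexConjugate

/-! ### Growth and vanishing on the half-line -/

theorem isLittleO_atTop_of_hasDerivAt {E : Type*} [NormedAddCommGroup E] [NormedSpace ℝ E]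
    {g g' : ℝ → E} {Φ Φ' : ℝ → ℝ} (hg : ∀ᶠ x in atTop, HasDerivAt g (g' x) x)
    (hΦ : ∀ᶠ x in atTop, HasDerivAt Φ (Φ' x) x) (hΦ' : ∀ᶠ x in atTop, 0 ≤ Φ' x)
    (hΦ_top : Tendsto Φ atTop atTop) (h : g' =o[atTop] Φ') : g =o[atTop] Φ := by
  refine isLittleO_iff.2 fun ε hε => ?_
  obtain ⟨X, hX⟩ := eventually_atTop.1
    (hg.and (hΦ.and (hΦ'.and (isLittleO_iff.1 h (half_pos hε)))))
  have hbound : ∀ x ≥ X, ‖g x‖ ≤ ‖g X‖ + ε / 2 * (Φ x - Φ X) := fun x hx =>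
    have hB : ∀ t ≥ X, HasDerivAt (fun t => ‖g X‖ + ε / 2 * (Φ t - Φ X)) (ε / 2 * Φ' t) t :=
      fun t ht => (((hX t ht).2.1.sub_const _).const_mul _).const_add _
    image_norm_le_of_norm_deriv_right_le_deriv_boundary'
      (fun t ht => (hX t ht.1).1.continuousAt.continuousWithinAt)
      (fun t ht => (hX t ht.1).1.hasDerivWithinAt) (by simp)
      (fun t ht => (hB t ht.1).continuousAt.continuousWithinAt)
      (fun t ht => (hB t ht.1).hasDerivWithinAt)
      (fun t ht => by simpa [abs_of_nonneg (hX t ht.1).2.2.1] using (hX t ht.1).2.2.2)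
      (Set.right_mem_Icc.2 hx)
  filter_upwards [eventually_ge_atTop X, hΦ_top.eventually_ge_atTop 0,
    (hΦ_top.const_mul_atTop (half_pos hε)).eventually_ge_atTop (‖g X‖ - ε / 2 * Φ X)]
    with x hxX hΦx hx
  rw [Real.norm_of_nonneg hΦx]
  linarith [hbound x hxX]

/-- A positive solution of the Riccati inequality `G' ≥ k G²` blows up in finite time: `-1 / G`
increases at rate at least `k` and so cannot stay negative. -/
theorem nonpos_of_mul_sq_le_deriv {G G' : ℝ → ℝ} {a k : ℝ} (hk : 0 < k)
    (hG : ∀ x ≥ a, HasDerivAt G (G' x) x) (hle : ∀ x ≥ a, k * G x ^ 2 ≤ G' x) : G a ≤ 0 := by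
  by_contra! ha
  have hmono : MonotoneOn G (Set.Ici a) :=
    monotoneOn_of_hasDerivWithinAt_nonneg (convex_Ici a) (f' := G')
      (fun x hx => (hG x hx).continuousAt.continuousWithinAt)
      (fun x hx => (hG x (interior_subset hx)).hasDerivWithinAt)
      (fun x hx => le_trans (by positivity) (hle x (interior_subset hx)))
  have hpos : ∀ x ≥ a, 0 < G x := fun x hx => ha.trans_le (hmono Set.self_mem_Ici hx hx)
  have hinv : ∀ x ≥ a, HasDerivAt (fun x => -(G x)⁻¹ - k * x) (G' x / G x ^ 2 - k) x :=
    fun x hx => (((hG x hx).inv (hpos x hx).ne').neg.sub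
      ((hasDerivAt_id x).const_mul k)).congr_deriv (by ring)
  have hinv_mono : MonotoneOn (fun x => -(G x)⁻¹ - k * x) (Set.Ici a) :=
    monotoneOn_of_hasDerivWithinAt_nonneg (convex_Ici a) (f' := fun x => G' x / G x ^ 2 - k)
      (fun x hx => (hinv x hx).continuousAt.continuousWithinAt)
      (fun x hx => (hinv x (interior_subset hx)).hasDerivWithinAt)
      (fun x hx => by
        have hx : a ≤ x := interior_subset hx
        exact sub_nonneg.2 ((le_div_iff₀ (pow_pos (hpos x hx) 2)).2 (hle x hx)))
  have hb : a ≤ a + (k * G a)⁻¹ := le_add_of_nonneg_right (by positivity)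
  have hle_b : -(G a)⁻¹ - k * a ≤ -(G (a + (k * G a)⁻¹))⁻¹ - k * (a + (k * G a)⁻¹) :=
    hinv_mono Set.self_mem_Ici hb hb
  have hGb := inv_pos.2 (hpos _ hb)
  have hstep : k * (a + (k * G a)⁻¹) = k * a + (G a)⁻¹ := by field_simp
  linarith

theorem hasDerivAt_re_mul_conj_mul {c q v' : ℂ} {v w : ℝ → ℂ} {x : ℝ}
    (hv : HasDerivAt v (w x) x) (hw : HasDerivAt w v' x) (hv' : v' = q * v x) :
    HasDerivAt (fun x => (c * (conj (v x) * w x)).re)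
      (c.re * ‖w x‖ ^ 2 + (c * q).re * ‖v x‖ ^ 2) x := by
  have h := Complex.reCLM.hasFDerivAt.comp_hasDerivAt x ((hv.star.mul hw).const_mul c)
  refine h.congr_deriv ?_
  have hsplit : c * (conj (w x) * w x + conj (v x) * v')
      = ((‖w x‖ ^ 2 : ℝ) : ℂ) * c + ((‖v x‖ ^ 2 : ℝ) : ℂ) * (c * q) := by
    rw [hv']
    push_cast
    rw [← Complex.conj_mul', ← Complex.conj_mul']
    ring
  calc (c * (conj (w x) * w x + conj (v x) * v')).re = _ := by
        rw [hsplit, Complex.add_re, Complex.re_ofReal_mul, Complex.re_ofReal_mul]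
    _ = c.re * ‖w x‖ ^ 2 + (c * q).re * ‖v x‖ ^ 2 := by ring

theorem sq_re_mul_conj_mul_le {a : ℂ} {B : ℝ} (ha : ‖a‖ ≤ B) (b c : ℂ) :
    (c * (conj a * b)).re ^ 2 ≤ (‖c‖ * B) ^ 2 * ‖b‖ ^ 2 := by
  have habs : |(c * (conj a * b)).re| ≤ ‖c‖ * B * ‖b‖ := by
    refine (Complex.abs_re_le_norm _).trans ?_
    rw [norm_mul, norm_mul, RCLike.norm_conj, mul_assoc]
    gcongr
  rw [← sq_abs, ← mul_pow]
  gcongr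

/-- The function `G = Re (c * conj v * v')` vanishes at `0`, is nondecreasing, and satisfies
`G' ≥ k G²` wherever `v` is bounded. -/
theorem re_mul_conj_mul_eq_zero_of_isBigO_one {c : ℂ} {q v w : ℝ → ℂ} (hc : 0 < c.re)
    (hq : ∀ x ≥ 0, 0 ≤ (c * q x).re) (hv : ∀ x, HasDerivAt v (w x) x)
    (hw : ∀ x, HasDerivAt w (q x * v x) x) (h0 : v 0 = 0)
    (hbdd : v =O[atTop] (1 : ℝ → ℝ)) {x : ℝ} (hx : 0 ≤ x) :
    (c * (conj (v x) * w x)).re = 0 := by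
  set G : ℝ → ℝ := fun x => (c * (conj (v x) * w x)).re
  have hG : ∀ x, HasDerivAt G (c.re * ‖w x‖ ^ 2 + (c * q x).re * ‖v x‖ ^ 2) x := fun x =>
    hasDerivAt_re_mul_conj_mul (hv x) (hw x) rfl
  have hG'_ge : ∀ x ≥ 0, c.re * ‖w x‖ ^ 2 ≤ c.re * ‖w x‖ ^ 2 + (c * q x).re * ‖v x‖ ^ 2 :=
    fun x hx => le_add_of_nonneg_right (mul_nonneg (hq x hx) (sq_nonneg _))
  have hG_mono : MonotoneOn G (Set.Ici 0) :=
    monotoneOn_of_hasDerivWithinAt_nonneg (convex_Ici 0)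
      (fun x _ => (hG x).continuousAt.continuousWithinAt) (fun x _ => (hG x).hasDerivWithinAt)
      (fun x hx => le_trans (by positivity) (hG'_ge x (interior_subset hx)))
  refine le_antisymm ?_ (by simpa [G, h0] using hG_mono Set.self_mem_Ici hx hx)
  obtain ⟨B, hB, hvB⟩ := hbdd.exists_pos
  obtain ⟨X, hX⟩ := eventually_atTop.1 hvB.bound
  have hcn : 0 < ‖c‖ := hc.trans_le (Complex.re_le_norm c)
  have hmax : 0 ≤ max x X := hx.trans (le_max_left _ _)
  have hriccati : ∀ t ≥ max x X, c.re / (‖c‖ * B) ^ 2 * G t ^ 2 ≤ c.re * ‖w t‖ ^ 2 := by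
    intro t ht
    have hvt : ‖v t‖ ≤ B := by simpa using hX t ((le_max_right _ _).trans ht)
    calc c.re / (‖c‖ * B) ^ 2 * G t ^ 2
        ≤ c.re / (‖c‖ * B) ^ 2 * ((‖c‖ * B) ^ 2 * ‖w t‖ ^ 2) := by
          gcongr
          exact sq_re_mul_conj_mul_le hvt _ _
      _ = c.re * ‖w t‖ ^ 2 := by field_simp
  exact (hG_mono hx hmax (le_max_left x X)).trans <|
    nonpos_of_mul_sq_le_deriv (k := c.re / (‖c‖ * B) ^ 2) (by positivity) (fun t _ => hG t)
      fun t ht => (hriccati t ht).trans (hG'_ge t (hmax.trans ht))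

theorem eq_zero_of_isBigO_one_of_re_mul_nonneg {c : ℂ} {q v w : ℝ → ℂ} (hc : 0 < c.re)
    (hq : ∀ x ≥ 0, 0 ≤ (c * q x).re) (hv : ∀ x, HasDerivAt v (w x) x)
    (hw : ∀ x, HasDerivAt w (q x * v x) x) (h0 : v 0 = 0)
    (hbdd : v =O[atTop] (1 : ℝ → ℝ)) : ∀ x ≥ 0, v x = 0 := by
  have hG_zero : ∀ x ∈ Set.Ici (0 : ℝ), (c * (conj (v x) * w x)).re = 0 := fun x hx =>
    re_mul_conj_mul_eq_zero_of_isBigO_one hc hq hv hw h0 hbdd hx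
  have hw_zero : ∀ x ≥ 0, w x = 0 := by
    intro x hx
    have hG' : c.re * ‖w x‖ ^ 2 + (c * q x).re * ‖v x‖ ^ 2 = 0 :=
      (uniqueDiffOn_Ici (0 : ℝ) x hx).eq_deriv _
        (hasDerivAt_re_mul_conj_mul (hv x) (hw x) rfl).hasDerivWithinAt
        ((hasDerivWithinAt_const x (Set.Ici 0) (0 : ℝ)).congr hG_zero (hG_zero x hx))
    have hle : c.re * ‖w x‖ ^ 2 ≤ 0 := by
      linarith [mul_nonneg (hq x hx) (sq_nonneg ‖v x‖)]
    simpa using le_antisymm (nonpos_of_mul_nonpos_right hle hc) (sq_nonneg _)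
  intro x hx
  rw [← h0]
  exact constant_of_has_deriv_right_zero (fun t _ => (hv t).continuousAt.continuousWithinAt)
    (fun t ht => hw_zero t ht.1 ▸ (hv t).hasDerivWithinAt) x (Set.right_mem_Icc.2 hx)

/-! ### Wronskians of entire solutions -/

/-- `y` is an entire solution of the complex linear equation `y'' = Q y`. -/
structure IsEntireSolution (Q y : ℂ → ℂ) : Prop where
  differentiable : Differentiable ℂ y
  deriv_deriv : ∀ z, deriv (deriv y) z = Q z * y z

/-- The Wronskian `u v' - u' v` of two functions. -/
noncomputable def wronskian (u v : ℂ → ℂ) (z : ℂ) : ℂ :=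
  u z * deriv v z - deriv u z * v z

theorem eq_zero_of_wronskian_eq_zero {u v : ℂ → ℂ} {z₀ : ℂ} (hu : Differentiable ℂ u)
    (hv : Differentiable ℂ v) (hW : ∀ z, wronskian v u z = 0) (hv₀ : v z₀ ≠ 0) (hu₀ : u z₀ = 0) :
    u = 0 := by
  obtain ⟨r, hr, hne⟩ :=
    Metric.eventually_nhds_iff_ball.1 (hv.continuous.continuousAt.eventually_ne hv₀)
  have hderiv : ∀ z ∈ Metric.ball z₀ r, HasDerivAt (fun z => u z / v z) 0 z := fun z hz =>
    ((hu z).hasDerivAt.div (hv z).hasDerivAt (hne z hz)).congr_deriv <| by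
      rw [mul_comm (deriv u z), mul_comm (u z), ← zero_div (v z ^ 2), ← hW z, wronskian]
  have hzero : ∀ z ∈ Metric.ball z₀ r, u z = 0 := fun z hz => by
    have hconst := Metric.isOpen_ball.is_const_of_deriv_eq_zero
      (convex_ball z₀ r).isPreconnected
      (fun z hz => (hderiv z hz).differentiableAt.differentiableWithinAt)
      (fun z hz => (hderiv z hz).deriv) hz (Metric.mem_ball_self hr)
    simpa [hu₀, hne z hz] using hconst
  have hu_analytic : AnalyticOnNhd ℂ u Set.univ := fun z _ => hu.analyticAt z
  exact hu_analytic.eq_of_eventuallyEq (fun z _ => analyticAt_const)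
    (eventually_of_mem (Metric.ball_mem_nhds z₀ hr) hzero)

namespace IsEntireSolution

variable {Q u v : ℂ → ℂ}

theorem hasDerivAt (hu : IsEntireSolution Q u) (z : ℂ) : HasDerivAt u (deriv u z) z :=
  (hu.differentiable z).hasDerivAt

theorem hasDerivAt_deriv (hu : IsEntireSolution Q u) (z : ℂ) :
    HasDerivAt (deriv u) (Q z * u z) z :=
  hu.deriv_deriv z ▸ (hu.differentiable.deriv z).hasDerivAt

theorem of_hasDerivAt {u' : ℂ → ℂ} (h : ∀ z, HasDerivAt u (u' z) z)
    (h' : ∀ z, HasDerivAt u' (Q z * u z) z) : IsEntireSolution Q u where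
  differentiable z := (h z).differentiableAt
  deriv_deriv z := by rw [funext fun w => (h w).deriv, (h' z).deriv]

theorem add (hu : IsEntireSolution Q u) (hv : IsEntireSolution Q v) :
    IsEntireSolution Q (fun z => u z + v z) :=
  of_hasDerivAt (fun z => (hu.hasDerivAt z).add (hv.hasDerivAt z)) fun z =>
    ((hu.hasDerivAt_deriv z).add (hv.hasDerivAt_deriv z)).congr_deriv (by ring)

theorem const_mul (hu : IsEntireSolution Q u) (c : ℂ) : IsEntireSolution Q (fun z => c * u z) :=
  of_hasDerivAt (fun z => (hu.hasDerivAt z).const_mul c) fun z =>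
    ((hu.hasDerivAt_deriv z).const_mul c).congr_deriv (by ring)

theorem comp_const_mul (hu : IsEntireSolution Q u) (c : ℂ) :
    IsEntireSolution (fun z => c ^ 2 * Q (c * z)) (fun z => u (c * z)) := by
  have hc : ∀ z, HasDerivAt (fun z => c * z) c z := fun z => by
    simpa using (hasDerivAt_id z).const_mul c
  exact of_hasDerivAt (fun z => (hu.hasDerivAt (c * z)).comp z (hc z)) fun z =>
    (((hu.hasDerivAt_deriv (c * z)).comp z (hc z)).mul_const c).congr_deriv (by ring)

theorem wronskian_eq (hu : IsEntireSolution Q u) (hv : IsEntireSolution Q v) (z w : ℂ) :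
    wronskian u v z = wronskian u v w := by
  have hW : ∀ z, HasDerivAt (wronskian u v) 0 z := fun z =>
    (((hu.hasDerivAt z).mul (hv.hasDerivAt_deriv z)).sub
      ((hu.hasDerivAt_deriv z).mul (hv.hasDerivAt z))).congr_deriv (by ring)
  exact is_const_of_deriv_eq_zero (fun z => (hW z).differentiableAt) (fun z => (hW z).deriv) z w

/-- Since `(u / v)' = W / v²`, a nonzero Wronskian `W` would force `u / v` to grow like `W * Φ`. -/
theorem wronskian_eq_zero_of_isLittleO {Φ Φ' : ℝ → ℝ} (hu : IsEntireSolution Q u)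
    (hv : IsEntireSolution Q v) (hΦ : ∀ᶠ x in atTop, HasDerivAt Φ (Φ' x) x)
    (hΦ' : ∀ᶠ x in atTop, 0 ≤ Φ' x) (hΦ_top : Tendsto Φ atTop atTop)
    (hvΦ : Tendsto (fun x : ℝ => v x ^ 2 * Φ' x) atTop (𝓝 1))
    (huv : (fun x : ℝ => u x / v x) =o[atTop] Φ) (z : ℂ) : wronskian v u z = 0 := by
  set W := wronskian v u z
  have hg : ∀ᶠ x : ℝ in atTop, HasDerivAt (fun x : ℝ => u x / v x - W * Φ x)
      (W * (((v x ^ 2 * Φ' x)⁻¹ - 1) * Φ' x)) x := by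
    filter_upwards [hΦ, hvΦ.eventually_ne one_ne_zero] with x hΦx hne
    obtain ⟨hvx, hΦ'x⟩ : v x ≠ 0 ∧ (Φ' x : ℂ) ≠ 0 := by simpa using hne
    have hquot := (hu.hasDerivAt x).comp_ofReal.div (hv.hasDerivAt x).comp_ofReal hvx
    refine (hquot.sub (hΦx.ofReal_comp.const_mul W)).congr_deriv ?_
    have hW : W = v x * deriv u x - deriv v x * u x := hv.wronskian_eq hu z x
    field_simp
    rw [hW]
    ring
  have hinv : Tendsto (fun x : ℝ => (v x ^ 2 * Φ' x)⁻¹ - 1) atTop (𝓝 0) := by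
    simpa using (hvΦ.inv₀ one_ne_zero).sub_const 1
  have hg' : (fun x : ℝ => W * (((v x ^ 2 * Φ' x)⁻¹ - 1) * Φ' x)) =o[atTop] Φ' := by
    have h := (((isLittleO_one_iff ℂ).2 hinv).mul_isBigO
      (isBigO_refl (fun x => (Φ' x : ℂ)) atTop)).const_mul_left W
    simpa using h.norm_right
  have hWΦ : (fun x => W * (Φ x : ℂ)) =o[atTop] Φ := by
    simpa using huv.sub (isLittleO_atTop_of_hasDerivAt hg hΦ hΦ' hΦ_top hg')
  by_contra hW
  have hΦΦ : Φ =o[atTop] Φ := by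
    simpa using ((isLittleO_const_mul_left_iff hW).1 hWΦ).norm_left
  exact isLittleO_irrefl (hΦ_top.eventually_ne_atTop 0).frequently hΦΦ

end IsEntireSolution

/-! ### Liouville–Green asymptotics along rays -/

theorem arg_ofReal_mul_exp_mul_I {x θ : ℝ} (hx : 0 < x) (hθ : θ ∈ Set.Ioc (-π) π) :
    Complex.arg (x * Complex.exp (θ * I)) = θ := by
  rw [Complex.exp_mul_I, Complex.arg_mul_cos_add_sin_mul_I hx hθ]

theorem norm_ofReal_mul_exp_mul_I {x : ℝ} (hx : 0 < x) (θ : ℝ) :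
    ‖x * Complex.exp (θ * I)‖ = x := by
  rw [norm_mul, Complex.norm_exp_ofReal_mul_I, mul_one, Complex.norm_of_nonneg hx.le]

theorem ofReal_mul_exp_mul_I_cpow {x θ : ℝ} (hx : 0 < x) (hθ : θ ∈ Set.Ioc (-π) π) (s : ℝ) :
    (x * Complex.exp (θ * I)) ^ (s : ℂ) = (x ^ s : ℝ) * Complex.exp ((s * θ : ℝ) * I) := by
  rw [Complex.cpow_ofReal, arg_ofReal_mul_exp_mul_I hx hθ, norm_ofReal_mul_exp_mul_I hx,
    Complex.exp_mul_I, Complex.ofReal_cos, Complex.ofReal_sin, mul_comm s]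

/-- The Liouville–Green phase `∫₀ˣ t ^ (3 / 2) dt` of the equation `y'' = (z ^ 3 + λ) y` at
leading order; standard solutions behave like `x ^ (-3 / 4) * exp (-lgPhase x)`. -/
noncomputable def lgPhase (x : ℝ) : ℝ :=
  2 / 5 * x ^ (5 / 2 : ℝ)

theorem hasDerivAt_lgPhase {x : ℝ} (hx : 0 < x) :
    HasDerivAt lgPhase ((x ^ (3 / 4 : ℝ)) ^ 2) x := by
  refine ((Real.hasDerivAt_rpow_const (Or.inl hx.ne')).const_mul (2 / 5)).congr_deriv ?_
  rw [← Real.rpow_natCast, ← Real.rpow_mul hx.le]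
  norm_num
  ring

theorem tendsto_lgPhase_atTop : Tendsto lgPhase atTop atTop :=
  (tendsto_rpow_atTop (by norm_num)).const_mul_atTop (by norm_num)

theorem isLittleO_exp_neg_mul_lgPhase {κ : ℝ} (hκ : 0 < κ) :
    (fun x => Real.exp (-(κ * lgPhase x))) =o[atTop] (fun x : ℝ => x⁻¹) := by
  have h := (isLittleO_exp_neg_mul_rpow_atTop (show 0 < κ * (2 / 5) by positivity)
    (-(2 / 5))).comp_tendsto (tendsto_rpow_atTop (show (0 : ℝ) < 5 / 2 by norm_num))
  refine h.congr' (Eventually.of_forall fun x => ?_) ?_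
  · simp only [Function.comp_apply, lgPhase]
    ring_nf
  · filter_upwards [eventually_ge_atTop 0] with x hx
    rw [Function.comp_apply, ← Real.rpow_mul hx, ← Real.rpow_neg_one]
    norm_num

theorem IsEntireSolution.wronskian_eq_zero_of_recessive {Q u v : ℂ → ℂ}
    (hu : IsEntireSolution Q u) (hv : IsEntireSolution Q v)
    (hv_lim : Tendsto (fun x : ℝ => v x * (x ^ (3 / 4 : ℝ) : ℝ) * Complex.exp (lgPhase x))
      atTop (𝓝 1))
    (hu_lim : Tendsto (fun x : ℝ => u x * (x ^ (3 / 4 : ℝ) : ℝ) * Complex.exp (-lgPhase x))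
      atTop (𝓝 0)) (z : ℂ) : wronskian v u z = 0 := by
  refine hu.wronskian_eq_zero_of_isLittleO hv (Φ := fun x => Real.exp (2 * lgPhase x) / 2)
    (Φ' := fun x => (x ^ (3 / 4 : ℝ)) ^ 2 * Real.exp (2 * lgPhase x)) ?_
    (Eventually.of_forall fun x => by positivity) ?_ ?_ ?_ z
  · filter_upwards [eventually_gt_atTop 0] with x hx
    exact (((hasDerivAt_lgPhase hx).const_mul 2).exp.div_const 2).congr_deriv (by ring)
  · exact (Real.tendsto_exp_atTop.comp
      (tendsto_lgPhase_atTop.const_mul_atTop two_pos)).atTop_div_const two_pos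
  · refine (one_pow (M := ℂ) 2 ▸ hv_lim.pow 2).congr fun x => ?_
    push_cast
    rw [two_mul, Complex.exp_add]
    ring
  · have hquot := (hu_lim.div hv_lim one_ne_zero).mul_const 2
    rw [zero_div, zero_mul] at hquot
    have hquot' : Tendsto (fun x : ℝ => u x / v x / (Real.exp (2 * lgPhase x) / 2 : ℝ)) atTop
        (𝓝 0) := by
      refine hquot.congr' ?_
      filter_upwards [eventually_gt_atTop 0] with x hx
      have hp : ((x ^ (3 / 4 : ℝ) : ℝ) : ℂ) ≠ 0 := by
        exact_mod_cast (Real.rpow_pos_of_pos hx _).ne'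
      rw [Pi.div_apply]
      push_cast
      rw [two_mul, Complex.exp_add, Complex.exp_neg]
      field_simp
    have hO : (fun x : ℝ => u x / v x) =o[atTop]
        fun x => ((Real.exp (2 * lgPhase x) / 2 : ℝ) : ℂ) :=
      (isLittleO_iff_tendsto fun x hx => by simp at hx).2 hquot'
    simpa only [Complex.norm_real, isLittleO_norm_right] using hO.norm_right

namespace IsStdSolutionFamily

variable {f : ℂ → ℂ → ℂ} (hf : IsStdSolutionFamily f)
include hf

theorem isEntireSolution (lam : ℂ) : IsEntireSolution (fun z => z ^ 3 + lam) (fun z => f z lam) :=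
  ⟨(hf.1 lam).1, (hf.1 lam).2⟩

theorem tendsto_on_ray (lam : ℂ) {θ : ℝ} (hθ : |θ| < 3 * π / 5) :
    Tendsto (fun x : ℝ => f (x * Complex.exp (θ * I)) lam * (x ^ (3 / 4 : ℝ) : ℝ) *
      Complex.exp (lgPhase x * Complex.exp ((5 / 2 * θ : ℝ) * I)))
      atTop (𝓝 (Complex.exp (-(3 / 4 * θ : ℝ) * I))) := by
  obtain ⟨C, -, R, -, hC⟩ := hf.2 (3 * π / 5 - |θ|) (sub_pos.2 hθ) {lam} isCompact_singleton
  have hθ_mem : θ ∈ Set.Ioc (-π) π :=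
    ⟨by linarith [abs_lt.1 hθ, Real.pi_pos], by linarith [abs_lt.1 hθ, Real.pi_pos]⟩
  have hbound : ∀ᶠ x : ℝ in atTop, ‖f (x * Complex.exp (θ * I)) lam *
      ((x ^ (3 / 4 : ℝ) : ℝ) * Complex.exp ((3 / 4 * θ : ℝ) * I)) *
      Complex.exp (lgPhase x * Complex.exp ((5 / 2 * θ : ℝ) * I)) - 1‖
        ≤ C * x ^ (-(1 / 2) : ℝ) := by
    filter_upwards [eventually_gt_atTop 0, eventually_ge_atTop R] with x hx hxR
    have h := hC lam rfl (x * Complex.exp (θ * I)) (by rwa [norm_ofReal_mul_exp_mul_I hx])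
      (by rw [arg_ofReal_mul_exp_mul_I hx hθ_mem, sub_sub_cancel])
    have h34 := ofReal_mul_exp_mul_I_cpow hx hθ_mem (3 / 4)
    have h52 := ofReal_mul_exp_mul_I_cpow hx hθ_mem (5 / 2)
    push_cast at h34 h52
    rw [norm_ofReal_mul_exp_mul_I hx, h34, h52] at h
    simpa [lgPhase, mul_assoc] using h
  have hlim : Tendsto (fun x : ℝ => C * x ^ (-(1 / 2) : ℝ)) atTop (𝓝 0) := by
    simpa using (tendsto_rpow_neg_atTop (y := 1 / 2) (by norm_num)).const_mul C
  have hone := tendsto_iff_norm_sub_tendsto_zero.2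
    (squeeze_zero' (Eventually.of_forall fun _ => norm_nonneg _) hbound hlim)
  have hphase := hone.mul_const (Complex.exp (-(3 / 4 * θ : ℝ) * I))
  rw [one_mul] at hphase
  refine hphase.congr fun x => ?_
  rw [neg_mul, Complex.exp_neg]
  field_simp [Complex.exp_ne_zero]

theorem eventually_ne_zero (lam : ℂ) {θ : ℝ} (hθ : |θ| < 3 * π / 5) :
    ∀ᶠ x : ℝ in atTop, f (x * Complex.exp (θ * I)) lam ≠ 0 := by
  filter_upwards [(hf.tendsto_on_ray lam hθ).eventually_ne (Complex.exp_ne_zero _)] with x hx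
  exact left_ne_zero_of_mul (left_ne_zero_of_mul hx)

theorem isLittleO_inv (lam : ℂ) {θ : ℝ} (hθ : |θ| < π / 5) :
    (fun x : ℝ => f (x * Complex.exp (θ * I)) lam) =o[atTop] (fun x : ℝ => x⁻¹) := by
  have hκ : 0 < Real.cos (5 / 2 * θ) :=
    Real.cos_pos_of_mem_Ioo ⟨by linarith [abs_lt.1 hθ], by linarith [abs_lt.1 hθ]⟩
  have hbdd := (hf.tendsto_on_ray lam (hθ.trans (by linarith [Real.pi_pos]))).isBigO_one ℝ
  obtain ⟨B, hB⟩ := hbdd.bound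
  refine IsBigO.trans_isLittleO (IsBigO.of_bound B ?_) (isLittleO_exp_neg_mul_lgPhase hκ)
  filter_upwards [hB, eventually_ge_atTop 1] with x hx hx1
  rw [norm_mul, norm_mul, Complex.norm_of_nonneg (by positivity), Complex.norm_exp,
    Complex.re_ofReal_mul, Complex.exp_ofReal_mul_I_re, norm_one, mul_one] at hx
  rw [Real.norm_of_nonneg (Real.exp_nonneg _), Real.exp_neg, ← div_eq_mul_inv,
    le_div_iff₀ (Real.exp_pos _), mul_comm (Real.cos _)]
  refine le_trans ?_ hx
  gcongr
  exact le_mul_of_one_le_right (norm_nonneg _) (Real.one_le_rpow hx1 (by norm_num))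

end IsStdSolutionFamily

/-! ### The matching condition -/

theorem norm_add_re_pos_of_mem_slitPlane {z : ℂ} (hz : z ∈ slitPlane) : 0 < ‖z‖ + z.re := by
  rcases hz with hre | him
  · positivity
  · linarith [neg_abs_le z.re, Complex.abs_re_lt_norm.2 him]

theorem IsStdSolutionFamily.apply_zero_ne_zero {f : ℂ → ℂ → ℂ} (hf : IsStdSolutionFamily f)
    {lam : ℂ} (hlam : lam ∈ slitPlane) : f 0 lam ≠ 0 := by
  intro h0
  have hsol := hf.isEntireSolution lam
  have hpos := norm_add_re_pos_of_mem_slitPlane hlam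
  have hdecay : (fun x : ℝ => f x lam) =o[atTop] fun x : ℝ => x⁻¹ := by
    simpa using hf.isLittleO_inv lam (θ := 0) (by simpa using by positivity)
  have hbdd : (fun x : ℝ => f x lam) =O[atTop] (1 : ℝ → ℝ) :=
    hdecay.isBigO.trans (tendsto_inv_atTop_zero.isBigO_one ℝ)
  -- The multiplier `‖λ‖ + conj λ` turns both `1` and `λ` into the open right half-plane.
  have hc : (‖lam‖ + conj lam : ℂ).re = ‖lam‖ + lam.re := by simp
  have hcq : ∀ x ≥ (0 : ℝ), 0 ≤ ((‖lam‖ + conj lam) * ((x : ℂ) ^ 3 + lam)).re := fun x hx => by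
    have hsplit : (‖lam‖ + conj lam) * ((x : ℂ) ^ 3 + lam)
        = ((x ^ 3 : ℝ) : ℂ) * (‖lam‖ + conj lam) + (‖lam‖ : ℂ) * (‖lam‖ + lam) := by
      push_cast
      linear_combination Complex.conj_mul' lam
    rw [hsplit, Complex.add_re, Complex.re_ofReal_mul, Complex.re_ofReal_mul, hc, Complex.add_re,
      Complex.ofReal_re]
    positivity
  have hzero := eq_zero_of_isBigO_one_of_re_mul_nonneg (hc ▸ hpos) hcq
    (fun x => (hsol.hasDerivAt x).comp_ofReal) (fun x => (hsol.hasDerivAt_deriv x).comp_ofReal)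
    (by simpa using h0) hbdd
  obtain ⟨x, hx, hx0⟩ := ((hf.eventually_ne_zero lam (θ := 0) (by simpa using by positivity)).and
    (eventually_ge_atTop 0)).exists
  exact hx (by simpa using hzero x hx0)

theorem pow_five_eq_one {ω : ℂ} (hω : ω = Complex.exp (2 * π * I / 5)) :
    ω ^ 5 = 1 := by
  simpa [hω] using (Complex.isPrimitiveRoot_exp 5 (by norm_num)).pow_eq_one

theorem inv_mul_I_mul_ofReal {ω : ℂ} (hω : ω = Complex.exp (2 * π * I / 5)) (x : ℝ) :
    ω⁻¹ * (I * x) = x * Complex.exp ((π / 10 : ℝ) * I) := by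
  have hprod : ω⁻¹ * I = Complex.exp ((π / 10 : ℝ) * I) := by
    calc ω⁻¹ * I = Complex.exp (-(2 * π * I / 5)) * Complex.exp (π / 2 * I) := by
          rw [hω, Complex.exp_neg, Complex.exp_pi_div_two_mul_I]
      _ = Complex.exp ((π / 10 : ℝ) * I) := by
          rw [← Complex.exp_add]
          push_cast
          ring_nf
  rw [← hprod]
  ring

theorem mul_I_mul_ofReal {ω : ℂ} (hω : ω = Complex.exp (2 * π * I / 5)) (x : ℝ) :
    ω * (I * x) = (-x : ℝ) * Complex.exp ((-(π / 10) : ℝ) * I) := by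
  have hprod : ω * -I = Complex.exp ((-(π / 10) : ℝ) * I) := by
    calc ω * -I = Complex.exp (2 * π * I / 5) * Complex.exp (-π / 2 * I) := by
          rw [hω, Complex.exp_neg_pi_div_two_mul_I]
      _ = Complex.exp ((-(π / 10) : ℝ) * I) := by
          rw [← Complex.exp_add]
          push_cast
          ring_nf
  rw [← hprod]
  push_cast
  ring

/-- Sibuya's rotated solution `z ↦ f (c z, c⁻² λ)`; for a fifth root of unity `c` it solves the
same equation as `f (·, λ)`. -/
noncomputable def sibuyaRotation (f : ℂ → ℂ → ℂ) (c lam z : ℂ) : ℂ :=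
  f (c * z) ((c ^ 2)⁻¹ * lam)

namespace IsStdSolutionFamily

variable {f : ℂ → ℂ → ℂ} (hf : IsStdSolutionFamily f) {ω : ℂ}
include hf

theorem isEntireSolution_sibuyaRotation {c : ℂ} (hc : c ^ 5 = 1) (lam : ℂ) :
    IsEntireSolution (fun z => z ^ 3 + lam) (sibuyaRotation f c lam) := by
  have hc0 : c ≠ 0 := by
    rintro rfl
    norm_num at hc
  have h := (hf.isEntireSolution ((c ^ 2)⁻¹ * lam)).comp_const_mul c
  have hQ : (fun z => c ^ 2 * ((c * z) ^ 3 + (c ^ 2)⁻¹ * lam)) = fun z => z ^ 3 + lam := by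
    funext z
    field_simp
    linear_combination z ^ 3 * hc
  rwa [hQ] at h

theorem tendsto_sibuyaRotation_of_dominant (lam : ℂ) {θ : ℝ} (hθ : |θ| < 3 * π / 5)
    (hdom : Complex.exp ((5 / 2 * θ : ℝ) * I) = -1) :
    Tendsto (fun x : ℝ => sibuyaRotation f (Complex.exp (θ * I)) lam x *
      (x ^ (3 / 4 : ℝ) : ℝ) * Complex.exp (-lgPhase x))
      atTop (𝓝 (Complex.exp (-(3 / 4 * θ : ℝ) * I))) := by
  have h := hf.tendsto_on_ray ((Complex.exp (θ * I) ^ 2)⁻¹ * lam) hθ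
  simpa only [hdom, mul_neg_one, mul_comm _ (Complex.exp (θ * I)), sibuyaRotation] using h

/-- The two dominant leading terms have coefficients `e ^ (∓ 3 π i / 10)`, and `ω` is the weight
that makes them cancel. -/
theorem tendsto_sibuyaRotation_add (hω : ω = Complex.exp (2 * π * I / 5)) (lam : ℂ) :
    Tendsto (fun x : ℝ => (sibuyaRotation f ω lam x + ω * sibuyaRotation f ω⁻¹ lam x) *
      (x ^ (3 / 4 : ℝ) : ℝ) * Complex.exp (-lgPhase x)) atTop (𝓝 0) := by
  have hθ : |2 * π / 5| < 3 * π / 5 := by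
    rw [abs_of_pos (by positivity)]
    linarith [Real.pi_pos]
  have hω_exp : Complex.exp ((2 * π / 5 : ℝ) * I) = ω := by
    rw [hω]
    push_cast
    ring_nf
  have hω_inv : Complex.exp ((-(2 * π / 5) : ℝ) * I) = ω⁻¹ := by
    rw [← hω_exp, ← Complex.exp_neg, Complex.ofReal_neg, neg_mul]
  have hplus := hf.tendsto_sibuyaRotation_of_dominant lam hθ <| by
    rw [← Complex.exp_pi_mul_I]
    push_cast
    ring_nf
  have hminus := hf.tendsto_sibuyaRotation_of_dominant lam ((abs_neg _).trans_lt hθ) <| by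
    rw [← Complex.exp_neg_pi_mul_I]
    push_cast
    ring_nf
  rw [hω_exp] at hplus
  rw [hω_inv] at hminus
  have hcancel : Complex.exp (-(3 / 4 * (2 * π / 5) : ℝ) * I) +
      ω * Complex.exp (-(3 / 4 * -(2 * π / 5) : ℝ) * I) = 0 := by
    have hshift : ω * Complex.exp (-(3 / 4 * -(2 * π / 5) : ℝ) * I) =
        Complex.exp (π * I) * Complex.exp (-(3 / 4 * (2 * π / 5) : ℝ) * I) := by
      rw [hω, ← Complex.exp_add, ← Complex.exp_add]
      push_cast
      ring_nf
    rw [hshift, Complex.exp_pi_mul_I]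
    ring
  rw [← hcancel]
  exact (hplus.add (hminus.const_mul ω)).congr fun x => by ring

theorem sibuyaRotation_eq_of_apply_zero_eq (hω : ω = Complex.exp (2 * π * I / 5)) {lam : ℂ}
    (hlam : f 0 lam ≠ 0)
    (hmatch : sibuyaRotation f ω lam 0 = -ω * sibuyaRotation f ω⁻¹ lam 0) (z : ℂ) :
    sibuyaRotation f ω lam z = -ω * sibuyaRotation f ω⁻¹ lam z := by
  have hω5 := pow_five_eq_one hω
  have hv := hf.isEntireSolution lam
  have hω5_inv : ω⁻¹ ^ 5 = 1 := by rw [inv_pow, hω5, inv_one]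
  have hu := (hf.isEntireSolution_sibuyaRotation hω5 lam).add
    ((hf.isEntireSolution_sibuyaRotation hω5_inv lam).const_mul ω)
  have hv_lim : Tendsto (fun x : ℝ => f x lam * (x ^ (3 / 4 : ℝ) : ℝ) * Complex.exp (lgPhase x))
      atTop (𝓝 1) := by
    simpa using hf.tendsto_on_ray lam (θ := 0) (by simpa using by positivity)
  have hW := hu.wronskian_eq_zero_of_recessive hv hv_lim (hf.tendsto_sibuyaRotation_add hω lam)
  have hzero := eq_zero_of_wronskian_eq_zero hu.differentiable hv.differentiable hW hlam
    (by rw [hmatch]; ring)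
  have hz : sibuyaRotation f ω lam z + ω * sibuyaRotation f ω⁻¹ lam z = 0 := congrFun hzero z
  linear_combination hz

theorem isLittleO_sibuyaRotation_inv_I_mul_atTop (hω : ω = Complex.exp (2 * π * I / 5))
    (lam : ℂ) :
    (fun x : ℝ => sibuyaRotation f ω⁻¹ lam (I * x)) =o[atTop] fun x : ℝ => x⁻¹ := by
  have hθ : |π / 10| < π / 5 := by
    rw [abs_of_pos (by positivity)]
    linarith [Real.pi_pos]
  simpa only [sibuyaRotation, inv_mul_I_mul_ofReal hω] using hf.isLittleO_inv ((ω⁻¹ ^ 2)⁻¹ * lam) hθ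

theorem isLittleO_sibuyaRotation_I_mul_atBot (hω : ω = Complex.exp (2 * π * I / 5)) (lam : ℂ) :
    (fun x : ℝ => sibuyaRotation f ω lam (I * x)) =o[atBot] fun x : ℝ => x⁻¹ := by
  have hθ : |-(π / 10)| < π / 5 := by
    rw [abs_neg, abs_of_pos (by positivity)]
    linarith [Real.pi_pos]
  have h := (hf.isLittleO_inv ((ω ^ 2)⁻¹ * lam) hθ).comp_tendsto tendsto_neg_atBot_atTop
  simpa only [Function.comp_def, ← mul_I_mul_ofReal hω, inv_neg,
    isLittleO_neg_right, sibuyaRotation] using h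

end IsStdSolutionFamily

theorem integrable_norm_sq_of_isBigO_inv {E : Type*} [NormedAddCommGroup E] {ψ : ℝ → E}
    (hψ : Continuous ψ) (hO : ψ =O[cocompact ℝ] fun x : ℝ => x⁻¹) :
    Integrable (fun x => ‖ψ x‖ ^ 2) := by
  have hinv : (fun x : ℝ => x⁻¹ ^ 2) =O[cocompact ℝ] fun x : ℝ => (1 + x ^ 2)⁻¹ := by
    refine IsBigO.of_bound 2 ?_
    filter_upwards [tendsto_norm_cocompact_atTop.eventually_ge_atTop 1] with x hx
    have hx2 : 1 ≤ x ^ 2 := (one_le_sq_iff_one_le_abs x).2 hx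
    rw [Real.norm_of_nonneg (by positivity), Real.norm_of_nonneg (by positivity), inv_pow,
      ← div_eq_mul_inv, inv_eq_one_div, div_le_div_iff₀ (by positivity) (by positivity)]
    linarith
  exact (hψ.norm.pow 2).locallyIntegrable.integrable_of_isBigO_cocompact
    ((hO.norm_left.pow 2).trans hinv) (integrable_inv_one_add_sq.integrableAtFilter _)

theorem isEigenvalueICO_of_isEntireSolution {lam : ℂ} {F : ℂ → ℂ}
    (hF : IsEntireSolution (fun z => I * z ^ 3 - lam) F) (hne : ∃ x : ℝ, F x ≠ 0)
    (hO : (fun x : ℝ => F x) =O[cocompact ℝ] fun x : ℝ => x⁻¹) : IsEigenvalueICO lam := by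
  have hsmooth : ContDiff ℝ 2 (fun x : ℝ => F x) :=
    (hF.differentiable.contDiff.restrict_scalars ℝ).comp Complex.ofRealCLM.contDiff
  refine ⟨fun x => F x, fun h => ?_, hsmooth,
    integrable_norm_sq_of_isBigO_inv hsmooth.continuous hO, fun x => ?_⟩
  · obtain ⟨x, hx⟩ := hne
    exact hx (congrFun h x)
  · rw [funext fun x : ℝ => (hF.hasDerivAt x).comp_ofReal.deriv,
      (hF.hasDerivAt_deriv x).comp_ofReal.deriv]
    ring

/-- The eigenfunction is `x ↦ f (ω⁻¹ i x, ω² λ)`. It is recessive as `x → +∞`, and the matching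
condition identifies it up to a factor with `f (ω i x, ω⁻² λ)`, which is recessive as
`x → -∞`. -/
theorem IsStdSolutionFamily.isEigenvalueICO_of_matching {f : ℂ → ℂ → ℂ}
    (hf : IsStdSolutionFamily f) {ω lam : ℂ} (hω : ω = Complex.exp (2 * π * I / 5))
    (hlam : f 0 lam ≠ 0)
    (hmatch : sibuyaRotation f ω lam 0 = -ω * sibuyaRotation f ω⁻¹ lam 0) :
    IsEigenvalueICO lam := by
  have hrel := hf.sibuyaRotation_eq_of_apply_zero_eq hω hlam hmatch
  have hω5_inv : ω⁻¹ ^ 5 = 1 := by rw [inv_pow, pow_five_eq_one hω, inv_one]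
  have hright := (hf.isLittleO_sibuyaRotation_inv_I_mul_atTop hω lam).isBigO
  have hleft : (fun x : ℝ => sibuyaRotation f ω⁻¹ lam (I * x)) =O[atBot] fun x : ℝ => x⁻¹ := by
    have h := (hf.isLittleO_sibuyaRotation_I_mul_atBot hω lam).isBigO
    simp only [hrel] at h
    exact (isBigO_const_mul_left_iff (neg_ne_zero.2 (hω ▸ Complex.exp_ne_zero _))).1 h
  have hsol : IsEntireSolution (fun z => I * z ^ 3 - lam)
      (fun z => sibuyaRotation f ω⁻¹ lam (I * z)) := by
    have h := (hf.isEntireSolution_sibuyaRotation hω5_inv lam).comp_const_mul I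
    have hQ : (fun z : ℂ => I ^ 2 * ((I * z) ^ 3 + lam)) = fun z => I * z ^ 3 - lam := by
      funext z
      linear_combination (lam + I * z ^ 3 * (I ^ 2 - 1)) * Complex.I_sq
    rwa [hQ] at h
  refine isEigenvalueICO_of_isEntireSolution hsol ?_ ?_
  · have hθ : |π / 10| < 3 * π / 5 := by
      rw [abs_of_pos (by positivity)]
      linarith [Real.pi_pos]
    obtain ⟨x, hx⟩ := (hf.eventually_ne_zero ((ω⁻¹ ^ 2)⁻¹ * lam) hθ).exists
    exact ⟨x, by rwa [sibuyaRotation, inv_mul_I_mul_ofReal hω]⟩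
  · rw [cocompact_eq_atBot_atTop]
    exact hleft.sup hright

theorem mem_slitPlane_of_abs_arg_lt_pi {z : ℂ} (hz : z ≠ 0) (h : |arg z| < π) :
    z ∈ slitPlane :=
  Complex.mem_slitPlane_iff_arg.2 ⟨((le_abs_self _).trans_lt h).ne, hz⟩

theorem matching_sufficient_general (f : ℂ → ℂ → ℂ) (hf : IsStdSolutionFamily f)
    (ω : ℂ) (hω : ω = Complex.exp (2 * Real.pi * Complex.I / 5))
    (α : ℂ) (hα : α = Complex.exp (Real.pi * Complex.I / 10))
    (ψp ψm : ℂ → ℂ → ℂ)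
    (hψp : ψp = fun z lam => f (α * z) (-(α ^ 2)⁻¹ * lam))
    (hψm : ψm = fun z lam => f (-α⁻¹ * z) (-α ^ 2 * lam))
    (lam : ℂ) (hlam : lam ∈ slitPlane) (hmatch : ψm 0 lam = -ω * ψp 0 lam) :
    IsEigenvalueICO lam := by
  have hωα : ω = α ^ 4 := by
    rw [hα, hω, ← Complex.exp_nat_mul]
    push_cast
    ring_nf
  have hα10 : α ^ 10 = -1 := by
    rw [hα, ← Complex.exp_nat_mul, ← Complex.exp_pi_mul_I]
    push_cast
    ring_nf
  have hα0 : α ≠ 0 := hα ▸ Complex.exp_ne_zero _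
  have hplus : -(α ^ 2)⁻¹ = (ω⁻¹ ^ 2)⁻¹ := by
    rw [hωα]
    field_simp
    linear_combination -hα10
  have hminus : -α ^ 2 = (ω ^ 2)⁻¹ := by
    rw [hωα]
    field_simp
    linear_combination -hα10
  refine hf.isEigenvalueICO_of_matching hω (hf.apply_zero_ne_zero hlam) ?_
  simpa [hψp, hψm, hplus, hminus, sibuyaRotation] using hmatch

/-- For `|λ|` large in the sector `|arg λ| ≤ π - δ`, the matching condition
`ψ₋(0,λ) = -ω ψ₊(0,λ)` is sufficient for `λ` to be an eigenvalue. -/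
theorem matching_sufficient (f : ℂ → ℂ → ℂ) (hf : IsStdSolutionFamily f)
    (ω : ℂ) (hω : ω = Complex.exp (2 * Real.pi * Complex.I / 5))
    (α : ℂ) (hα : α = Complex.exp (Real.pi * Complex.I / 10))
    (ψp ψm : ℂ → ℂ → ℂ)
    (hψp : ψp = fun z lam => f (α * z) (-(α ^ 2)⁻¹ * lam))
    (hψm : ψm = fun z lam => f (-α⁻¹ * z) (-α ^ 2 * lam)) :
    ∀ δ > (0 : ℝ), ∃ R > (0 : ℝ), ∀ lam : ℂ,
      R ≤ ‖lam‖ → |Complex.arg lam| ≤ Real.pi - δ →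
      ψm 0 lam = -ω * ψp 0 lam → IsEigenvalueICO lam :=
  fun _ hδ => ⟨1, one_pos, fun lam hR harg =>
    matching_sufficient_general f hf ω hω α hα ψp ψm hψp hψm lam <|
      mem_slitPlane_of_abs_arg_lt_pi (norm_pos_iff.1 (one_pos.trans_le hR)) (by linarith)⟩
end
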